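/- With σ_e² = 6.25, σ_d² = 0.25, σ_W² = 0.25, λ = 1.5, P = 0.5, and zero subjective means, define the quantizer encoder x(m) = √0.5·sgn(m) and the decoder ψ(y) = √(2/π)·0.5·tanh(√0.5·y/0.25) (which is the decoder's best response to the quantizer under its prior N(0, 0.25)). Then the integral of (m − ψ(√0.5·sgn(m) + w))² with respect to (gaussianReal 0 6.25) ⊗ (gaussianReal 0 0.25), plus 1.5·0.5, is strictly less than f(t) for every t ≥ 0, where f(t) = 0.25²·(6.25 − 0.25)/(0.25t + 0.25)² + 0.25·0.25/(0.25t + 0.25) + 1.5·6.25·t. -/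

import Mathlib

open MeasureTheory ProbabilityTheory

/-!
Under the quantizer, `y` normalised by the decoder is Gaussian with mean equal to its variance, the
ratio `γ = P / σ_W²`, once the sign of `m` has been divided out. Tilting `N(γ, γ)` by `exp (-x)`
recentres it, and `exp (-x) * (tanh x / cosh x) = tanh x - tanh x ^ 2` is then the integral of an
odd function, so `tanh` and `tanh ^ 2` have the same mean `T` under `N(γ, γ)`. The distortion is
therefore affine in `T`, and `1 - exp (-x) ≤ tanh x` gives `T ≥ 1 - exp (-γ / 2)`. For the given
parameters the quantizer costs less than `6.1`, while the tangent-line bound for the affine cost,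
which is convex in `t = A²`, stays above `6.1`.
-/

open scoped NNReal

section Gaussian

lemma tilted_mul_gaussianReal (μ : ℝ) (v : ℝ≥0) (t : ℝ) :
    (gaussianReal μ v).tilted (t * ·) = gaussianReal (μ + v * t) v := by
  have := isProbabilityMeasure_tilted (integrable_exp_mul_gaussianReal (μ := μ) (v := v) t)
  refine Measure.ext_of_complexMGF_id_eq (funext fun z => ?_)
  have hshift (x : ℝ) : (Real.exp (t * x) / mgf id (gaussianReal μ v) t) • Complex.exp (z * x)
      = Complex.exp ((z + t) * x) / mgf id (gaussianReal μ v) t := by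
    rw [Complex.real_smul, Complex.ofReal_div, Complex.ofReal_exp, div_mul_eq_mul_div,
      ← Complex.exp_add]
    push_cast
    ring_nf
  calc complexMGF id ((gaussianReal μ v).tilted (t * ·)) z
      = ∫ x, Complex.exp ((z + t) * x) / mgf id (gaussianReal μ v) t ∂gaussianReal μ v := by
        simp only [← hshift]
        exact integral_tilted_mul_eq_mgf (X := id) _
    _ = complexMGF id (gaussianReal μ v) (z + t) / mgf id (gaussianReal μ v) t :=
        integral_div _ _
    _ = complexMGF id (gaussianReal (μ + v * t) v) z := by
        simp only [complexMGF_id_gaussianReal, mgf_id_gaussianReal, Complex.ofReal_exp,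
          ← Complex.exp_sub]
        congr 1
        push_cast
        ring

instance isNegInvariant_gaussianReal_zero (v : ℝ≥0) : (gaussianReal 0 v).IsNegInvariant where
  neg_eq_self := gaussianReal_map_neg.trans (by rw [neg_zero])

lemma integral_eq_zero_of_odd {G E : Type*} [AddGroup G] [MeasurableSpace G] [MeasurableNeg G]
    [NormedAddCommGroup E] [NormedSpace ℝ E] {μ : Measure G} [μ.IsNegInvariant] {g : G → E}
    (hg : g.Odd) : ∫ x, g x ∂μ = 0 := by
  have h := integral_neg_eq_self g μ
  simp only [hg.eq, integral_neg] at h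
  have := IsAddTorsionFree.of_isTorsionFree ℝ E
  exact neg_eq_self.mp h

lemma integral_exp_neg_mul_gaussianReal_self_of_odd (v : ℝ≥0) {g : ℝ → ℝ} (hg : g.Odd) :
    ∫ x, Real.exp (-x) * g x ∂gaussianReal v v = 0 := by
  set μ := gaussianReal v v
  have hmgf : mgf id μ (-1) ≠ 0 := (mgf_pos (integrable_exp_mul_gaussianReal (-1))).ne'
  have htilt : μ.tilted (-1 * ·) = gaussianReal 0 v := by
    rw [tilted_mul_gaussianReal, mul_neg_one, add_neg_cancel]
  have hzero : ∫ x, Real.exp (-x) / mgf id μ (-1) * g x ∂μ = 0 := by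
    have h := integral_tilted_mul_eq_mgf (μ := μ) (X := id) (t := -1) g
    simp only [id] at h
    rw [htilt, integral_eq_zero_of_odd hg] at h
    simpa only [neg_one_mul, smul_eq_mul] using h.symm
  simpa only [div_mul_eq_mul_div, integral_div, div_eq_zero_iff, hmgf, or_false] using hzero

lemma integral_exp_neg_gaussianReal_self (v : ℝ≥0) :
    ∫ x, Real.exp (-x) ∂gaussianReal v v = Real.exp (-v / 2) := by
  have h := congrFun (mgf_id_gaussianReal (μ := v) (v := v)) (-1)
  simp only [mgf, id, neg_one_mul] at h
  rw [h]
  ring_nf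

lemma integral_sq_gaussianReal_zero (v : ℝ≥0) : ∫ x, x ^ 2 ∂gaussianReal 0 v = v := by
  rw [← variance_of_integral_eq_zero (by fun_prop) integral_id_gaussianReal,
    variance_fun_id_gaussianReal]

lemma integral_abs_gaussianReal_zero_one : ∫ x, |x| ∂gaussianReal 0 1 = √(2 / Real.pi) := by
  have hdensity (x : ℝ) : gaussianPDFReal 0 1 x • |x| =
      (√(2 * Real.pi))⁻¹ * (|x| ^ (1 : ℝ) * Real.exp (-(1 / 2) * |x| ^ (2 : ℝ))) := by
    simp only [gaussianPDFReal, NNReal.coe_one, mul_one, sub_zero, smul_eq_mul, Real.rpow_one,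
      Real.rpow_two, sq_abs]
    ring_nf
  have hmoment : ∫ x in Set.Ioi (0 : ℝ), x ^ (1 : ℝ) * Real.exp (-(1 / 2) * x ^ (2 : ℝ)) = 1 := by
    rw [integral_rpow_mul_exp_neg_mul_rpow two_pos (by norm_num) (by norm_num)]
    norm_num [Real.rpow_neg_one]
  simp_rw [integral_gaussianReal_eq_integral_smul one_ne_zero, hdensity, integral_const_mul]
  rw [integral_comp_abs (f := fun x : ℝ => x ^ (1 : ℝ) * Real.exp (-(1 / 2) * x ^ (2 : ℝ))),
    hmoment, Real.sqrt_mul zero_le_two, Real.sqrt_div zero_le_two]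
  field_simp
  exact (Real.sq_sqrt zero_le_two).symm

lemma integral_abs_gaussianReal_zero (v : ℝ≥0) :
    ∫ x, |x| ∂gaussianReal 0 v = √v * √(2 / Real.pi) := by
  have hscale : (gaussianReal 0 1).map (√v * ·) = gaussianReal 0 v := by
    rw [gaussianReal_map_const_mul, mul_zero, mul_one]
    congr 1
    exact NNReal.eq (Real.sq_sqrt v.coe_nonneg)
  rw [← hscale, integral_map (by fun_prop) (by fun_prop)]
  simp only [abs_mul, abs_of_nonneg (Real.sqrt_nonneg _), integral_const_mul,
    integral_abs_gaussianReal_zero_one]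

end Gaussian

section Tanh

lemma continuous_tanh : Continuous Real.tanh := by
  simp only [funext Real.tanh_eq_sinh_div_cosh]
  exact Real.continuous_sinh.div Real.continuous_cosh fun x => (Real.cosh_pos x).ne'

lemma one_sub_exp_neg_le_tanh (x : ℝ) : 1 - Real.exp (-x) ≤ Real.tanh x := by
  have hcosh := Real.cosh_pos x
  have hle : (1 - Real.exp (-x)) * Real.cosh x ≤ Real.sinh x := by
    have hmul : Real.exp (-x) * Real.exp x = 1 := by
      rw [← Real.exp_add, neg_add_cancel, Real.exp_zero]
    rw [Real.cosh_eq, Real.sinh_eq]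
    linarith [sq_nonneg (1 - Real.exp (-x))]
  rwa [Real.tanh_eq_sinh_div_cosh, le_div_iff₀ hcosh]

lemma exp_neg_mul_tanh_div_cosh (x : ℝ) :
    Real.exp (-x) * (Real.tanh x / Real.cosh x) = Real.tanh x - Real.tanh x ^ 2 := by
  have hcosh := (Real.cosh_pos x).ne'
  rw [← Real.cosh_sub_sinh, Real.tanh_eq_sinh_div_cosh]
  field_simp

lemma integrable_tanh_pow (μ : Measure ℝ) [IsFiniteMeasure μ] (n : ℕ) :
    Integrable (fun x => Real.tanh x ^ n) μ := by
  refine .of_bound (continuous_tanh.pow n).aestronglyMeasurable 1 (.of_forall fun x => ?_)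
  rw [norm_pow]
  exact pow_le_one₀ (norm_nonneg _) (Real.abs_tanh_lt_one x).le

lemma integrable_tanh (μ : Measure ℝ) [IsFiniteMeasure μ] : Integrable Real.tanh μ := by
  simpa only [pow_one] using integrable_tanh_pow μ 1

/-- The mean of `tanh` under `N(γ, γ)`: the correlation between an equiprobable sign and its
posterior mean when it is observed in Gaussian noise at signal-to-noise ratio `γ`. -/
noncomputable def signCorrelation (γ : ℝ≥0) : ℝ :=
  ∫ x, Real.tanh x ∂gaussianReal γ γ

lemma integral_tanh_sq_gaussianReal_self (γ : ℝ≥0) :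
    ∫ x, Real.tanh x ^ 2 ∂gaussianReal γ γ = signCorrelation γ := by
  have hodd : (fun x => Real.tanh x / Real.cosh x).Odd := fun x => by
    simp only [Real.tanh_neg, Real.cosh_neg, neg_div]
  have h := integral_exp_neg_mul_gaussianReal_self_of_odd γ hodd
  simp only [exp_neg_mul_tanh_div_cosh] at h
  rw [integral_sub (integrable_tanh _) (integrable_tanh_pow _ 2)] at h
  exact (sub_eq_zero.mp h).symm

lemma one_sub_exp_le_signCorrelation (γ : ℝ≥0) : 1 - Real.exp (-γ / 2) ≤ signCorrelation γ := by
  have hexp : Integrable (fun x => Real.exp (-x)) (gaussianReal γ γ) := by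
    simpa only [neg_one_mul] using integrable_exp_mul_gaussianReal (μ := γ) (v := γ) (-1)
  calc 1 - Real.exp (-γ / 2) = ∫ x, (1 - Real.exp (-x)) ∂gaussianReal γ γ := by
        rw [integral_sub (integrable_const _) hexp, integral_exp_neg_gaussianReal_self,
          integral_const, probReal_univ, one_smul]
    _ ≤ signCorrelation γ := integral_mono ((integrable_const _).sub hexp) (integrable_tanh _)
        one_sub_exp_neg_le_tanh

lemma integral_sub_mul_tanh_sq_gaussianReal_self (γ : ℝ≥0) (m c : ℝ) :
    ∫ x, (m - c * Real.tanh x) ^ 2 ∂gaussianReal γ γ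
      = m ^ 2 - (2 * c * m - c ^ 2) * signCorrelation γ := by
  have hexpand (x : ℝ) : (m - c * Real.tanh x) ^ 2
      = m ^ 2 - 2 * c * m * Real.tanh x + c ^ 2 * Real.tanh x ^ 2 := by ring
  have hlin := (integrable_tanh (gaussianReal γ γ)).const_mul (2 * c * m)
  have hsub : Integrable (fun x => m ^ 2 - 2 * c * m * Real.tanh x) (gaussianReal γ γ) :=
    (integrable_const _).sub hlin
  simp only [hexpand]
  rw [integral_add hsub ((integrable_tanh_pow _ 2).const_mul _),
    integral_sub (integrable_const _) hlin, integral_const_mul, integral_const_mul,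
    integral_tanh_sq_gaussianReal_self, ← signCorrelation, integral_const, probReal_univ, one_smul]
  ring

end Tanh

section Quantizer

lemma measurable_realSign : Measurable Real.sign :=
  Measurable.ite measurableSet_Iio measurable_const
    (Measurable.ite measurableSet_Ioi measurable_const measurable_const)

lemma realSign_mul_self (m : ℝ) : Real.sign m * m = |m| := by
  rcases lt_trichotomy m 0 with h | rfl | h
  · rw [Real.sign_of_neg h, abs_of_neg h, neg_one_mul]
  · simp
  · rw [Real.sign_of_pos h, abs_of_pos h, one_mul]

/-- The posterior mean `E[m | y]` of a decoder who believes `m ~ N(0, σ²)`, where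
`y = √P * sign m + w` and `w ~ N(0, vW)`. The factor `√(2 / π) * σ` is `E|m|`. -/
noncomputable def quantizerDecoder (σ : ℝ) (P vW : ℝ≥0) (y : ℝ) : ℝ :=
  √(2 / Real.pi) * σ * Real.tanh (√P * y / vW)

/-- The mean squared error, for a source `m ~ N(0, v)`, of the one-bit quantizer `√P * sign m` sent
through Gaussian noise of variance `vW` to `quantizerDecoder`. The decoder's standard deviation `σ`
need not match `v`. -/
noncomputable def quantizerDistortion (v vW P : ℝ≥0) (σ : ℝ) : ℝ :=
  ∫ p : ℝ × ℝ, (p.1 - quantizerDecoder σ P vW (√P * Real.sign p.1 + p.2)) ^ 2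
    ∂(gaussianReal 0 v).prod (gaussianReal 0 vW)

lemma abs_quantizerDecoder_le (σ : ℝ) (P vW : ℝ≥0) (y : ℝ) :
    |quantizerDecoder σ P vW y| ≤ |√(2 / Real.pi) * σ| := by
  rw [quantizerDecoder, abs_mul]
  exact mul_le_of_le_one_right (abs_nonneg _) (Real.abs_tanh_lt_one _).le

lemma integrable_sub_quantizerDecoder_sq (v vW P : ℝ≥0) (σ : ℝ) :
    Integrable
      (fun p : ℝ × ℝ => (p.1 - quantizerDecoder σ P vW (√P * Real.sign p.1 + p.2)) ^ 2)
      ((gaussianReal 0 v).prod (gaussianReal 0 vW)) := by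
  have hmeas : Measurable fun p : ℝ × ℝ =>
      quantizerDecoder σ P vW (√P * Real.sign p.1 + p.2) := by
    have := continuous_tanh.measurable
    have := measurable_realSign
    unfold quantizerDecoder
    fun_prop
  have hdecoder : MemLp (fun p : ℝ × ℝ => quantizerDecoder σ P vW (√P * Real.sign p.1 + p.2)) 2
      ((gaussianReal 0 v).prod (gaussianReal 0 vW)) :=
    .of_bound hmeas.aestronglyMeasurable _ (.of_forall fun _ => abs_quantizerDecoder_le σ P vW _)
  exact (((memLp_id_gaussianReal 2).comp_fst _).sub hdecoder).integrable_sq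

variable {v vW : ℝ≥0}

lemma gaussianReal_map_signed_observation (hvW : vW ≠ 0) (P : ℝ≥0) {s : ℝ} (hs : s ^ 2 = 1) :
    (gaussianReal 0 vW).map (fun w => s * (√P * (√P * s + w) / vW))
      = gaussianReal (P / vW : ℝ≥0) (P / vW) := by
  have hsqrt : √(P : ℝ) ^ 2 = P := Real.sq_sqrt P.coe_nonneg
  have haffine : (fun w : ℝ => s * (√P * (√P * s + w) / vW))
      = (fun x => ((P / vW : ℝ≥0) : ℝ) + x) ∘ fun w => (s * √P / vW) * w := by
    funext w
    simp only [Function.comp, NNReal.coe_div]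
    linear_combination (s ^ 2 / vW) * hsqrt + (P / vW : ℝ) * hs
  rw [haffine, ← Measure.map_map (by fun_prop) (by fun_prop), gaussianReal_map_const_mul,
    gaussianReal_map_const_add, mul_zero, zero_add]
  congr 1
  ext
  push_cast
  field_simp
  rw [hs, hsqrt, one_mul]

lemma integral_sub_quantizerDecoder_sq (hvW : vW ≠ 0) (P : ℝ≥0) (σ : ℝ) {m : ℝ} (hm : m ≠ 0) :
    ∫ w, (m - quantizerDecoder σ P vW (√P * Real.sign m + w)) ^ 2 ∂gaussianReal 0 vW
      = m ^ 2 - (2 * (√(2 / Real.pi) * σ) * |m| - (√(2 / Real.pi) * σ) ^ 2)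
          * signCorrelation (P / vW) := by
  set c := √(2 / Real.pi) * σ
  set s := Real.sign m
  have hsign : s = -1 ∨ s = 1 := Real.sign_apply_eq_of_ne_zero m hm
  have habs : s * m = |m| := realSign_mul_self m
  have hflip (u : ℝ) : (m - c * Real.tanh u) ^ 2 = (|m| - c * Real.tanh (s * u)) ^ 2 := by
    rw [← habs]
    rcases hsign with h | h <;> rw [h]
    · rw [neg_one_mul, neg_one_mul, Real.tanh_neg]
      ring
    · rw [one_mul, one_mul]
  have hs : s ^ 2 = 1 := by rcases hsign with h | h <;> rw [h] <;> norm_num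
  have hmeas : Measurable fun x => (|m| - c * Real.tanh x) ^ 2 := by
    have := continuous_tanh.measurable
    fun_prop
  calc ∫ w, (m - c * Real.tanh (√P * (√P * s + w) / vW)) ^ 2 ∂gaussianReal 0 vW
      = ∫ w, (|m| - c * Real.tanh (s * (√P * (√P * s + w) / vW))) ^ 2 ∂gaussianReal 0 vW := by
        simp only [hflip]
    _ = ∫ x, (|m| - c * Real.tanh x) ^ 2 ∂gaussianReal (P / vW : ℝ≥0) (P / vW) := by
        rw [← gaussianReal_map_signed_observation hvW P hs,
          integral_map (by fun_prop) hmeas.aestronglyMeasurable]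
    _ = m ^ 2 - (2 * c * |m| - c ^ 2) * signCorrelation (P / vW) := by
        rw [integral_sub_mul_tanh_sq_gaussianReal_self, sq_abs]

theorem quantizerDistortion_eq (hv : v ≠ 0) (hvW : vW ≠ 0) (P : ℝ≥0) (σ : ℝ) :
    quantizerDistortion v vW P σ
      = v - 2 / Real.pi * (σ * (2 * √v - σ)) * signCorrelation (P / vW) := by
  set c := √(2 / Real.pi) * σ
  set T := signCorrelation (P / vW)
  have hcond : (fun m => ∫ w, (m - quantizerDecoder σ P vW (√P * Real.sign m + w)) ^ 2
      ∂gaussianReal 0 vW) =ᵐ[gaussianReal 0 v] fun m => m ^ 2 - 2 * c * T * |m| + c ^ 2 * T := by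
    have := nullSingletonClass_gaussianReal (μ := 0) hv
    filter_upwards [Measure.ae_ne _ 0] with m hm
    rw [integral_sub_quantizerDecoder_sq hvW P σ hm]
    ring
  have hsq : Integrable (fun m : ℝ => m ^ 2) (gaussianReal 0 v) :=
    (memLp_id_gaussianReal 2).integrable_sq
  have habs : Integrable (fun m : ℝ => 2 * c * T * |m|) (gaussianReal 0 v) :=
    ((memLp_id_gaussianReal 1).integrable le_rfl).abs.const_mul _
  have hsub : Integrable (fun m : ℝ => m ^ 2 - 2 * c * T * |m|) (gaussianReal 0 v) :=
    hsq.sub habs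
  have hpi : √(2 / Real.pi) ^ 2 = 2 / Real.pi := Real.sq_sqrt (by positivity)
  rw [quantizerDistortion, integral_prod _ (integrable_sub_quantizerDecoder_sq v vW P σ),
    integral_congr_ae hcond, integral_add hsub (integrable_const _),
    integral_sub hsq habs, integral_const_mul, integral_sq_gaussianReal_zero,
    integral_abs_gaussianReal_zero, integral_const, probReal_univ, one_smul]
  simp only [c]
  linear_combination (-(σ * (2 * √v - σ) * T)) * hpi

theorem quantizerDistortion_le (hv : v ≠ 0) (hvW : vW ≠ 0) (P : ℝ≥0) {σ : ℝ} (hσ : 0 ≤ σ)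
    (hσv : σ ≤ 2 * √v) :
    quantizerDistortion v vW P σ
      ≤ v - 2 / Real.pi * (σ * (2 * √v - σ)) * (1 - Real.exp (-(P / vW : ℝ≥0) / 2)) := by
  rw [quantizerDistortion_eq hv hvW]
  have hgain : 0 ≤ 2 / Real.pi * (σ * (2 * √v - σ)) :=
    mul_nonneg (by positivity) (mul_nonneg hσ (sub_nonneg.mpr hσv))
  exact sub_le_sub_left (mul_le_mul_of_nonneg_left (one_sub_exp_le_signCorrelation _) hgain) _

end Quantizer

section AffineCost

/-- The encoder's expected cost `f(t)` under the affine policy `x = A m`, where `t = A²`, the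
decoder best responds to its own prior, and transmission power is charged at rate `l`. In the
paper's notation `ve = σ_e²`, `vd = σ_d²`, `vW = σ_W²` and `l = λ`. -/
noncomputable def affineCost (ve vd vW l t : ℝ) : ℝ :=
  vW ^ 2 * (ve - vd) / (vd * t + vW) ^ 2 + vd * vW / (vd * t + vW) + l * ve * t

lemma one_add_mul_one_sub_le_inv_pow {x : ℝ} (hx : 0 < x) (n : ℕ) :
    1 + n * (1 - x) ≤ (x ^ n)⁻¹ := by
  have hinv : 1 - x ≤ x⁻¹ - 1 := by
    simpa only [inv_inv] using (Real.one_sub_inv_le_log_of_pos (inv_pos.mpr hx)).trans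
      (Real.log_le_sub_one_of_pos (inv_pos.mpr hx))
  calc 1 + n * (1 - x) ≤ 1 + n * (x⁻¹ - 1) := by gcongr
    _ ≤ x⁻¹ ^ n := one_add_mul_sub_le_pow (by linarith [inv_pos.mpr hx]) n
    _ = (x ^ n)⁻¹ := inv_pow x n

lemma lt_affineCost {t : ℝ} (ht : 0 ≤ t) : 6.1 < affineCost 6.25 0.25 0.25 1.5 t := by
  -- Tangent lines are taken at `x = 1`, that is `t = 0.1`, near the minimiser `t ≈ 0.094`.
  obtain ⟨x, rfl⟩ : ∃ x, t = 1.1 * x - 1 := ⟨(1 + t) / 1.1, by ring⟩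
  have hx : 0 < x := by linarith
  have hcost : affineCost 6.25 0.25 0.25 1.5 (1.1 * x - 1)
      = 6 / 1.1 ^ 2 * (x ^ 2)⁻¹ + 0.25 / 1.1 * (x ^ 1)⁻¹ + 9.375 * (1.1 * x - 1) := by
    rw [affineCost, show 0.25 * (1.1 * x - 1) + 0.25 = 0.25 * 1.1 * x by ring]
    field_simp
    ring
  have hsq := one_add_mul_one_sub_le_inv_pow hx 2
  have hlin := one_add_mul_one_sub_le_inv_pow hx 1
  push_cast at hsq hlin
  rw [hcost]
  linarith

end AffineCost

lemma quantizerDistortion_add_power_lt :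
    quantizerDistortion (.mk 6.25 (by norm_num)) (.mk 0.25 (by norm_num)) (.mk 0.5 (by norm_num))
      0.5 + 1.5 * 0.5 < 6.1 := by
  set v := NNReal.mk 6.25 (by norm_num)
  set vW := NNReal.mk 0.25 (by norm_num)
  set P := NNReal.mk 0.5 (by norm_num)
  have hv : v ≠ 0 := NNReal.coe_ne_zero.mp (show (6.25 : ℝ) ≠ 0 by norm_num)
  have hvW : vW ≠ 0 := NNReal.coe_ne_zero.mp (show (0.25 : ℝ) ≠ 0 by norm_num)
  have hsqrt : √v = 2.5 := by
    rw [NNReal.coe_mk, show (6.25 : ℝ) = 2.5 ^ 2 by norm_num, Real.sqrt_sq (by norm_num)]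
  have hle := quantizerDistortion_le hv hvW P (σ := 0.5) (by norm_num) (by rw [hsqrt]; norm_num)
  have hexp : Real.exp (-1) < 0.368 := by linarith [Real.exp_neg_one_lt_d9]
  have hpi : 1.432 < 4.5 / Real.pi := by
    rw [lt_div_iff₀ Real.pi_pos]
    linarith [Real.pi_lt_d4]
  have hgain : 1.432 * (1 - 0.368) < 4.5 / Real.pi * (1 - Real.exp (-1)) := by
    gcongr
  have hγ : -(P / vW : ℝ≥0) / 2 = (-1 : ℝ) := by
    rw [NNReal.coe_div, NNReal.coe_mk, NNReal.coe_mk]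
    norm_num
  rw [hsqrt, hγ, NNReal.coe_mk,
    show 2 / Real.pi * (0.5 * (2 * 2.5 - 0.5)) = 4.5 / Real.pi by ring] at hle
  linarith

theorem stmt16 :
    let ψ : ℝ → ℝ := fun y =>
      Real.sqrt (2 / Real.pi) * 0.5 * Real.tanh (Real.sqrt 0.5 * y / 0.25)
    let ν : Measure (ℝ × ℝ) :=
      (gaussianReal 0 ⟨6.25, by norm_num⟩).prod (gaussianReal 0 ⟨0.25, by norm_num⟩)
    let f : ℝ → ℝ := fun t =>
      0.25 ^ 2 * (6.25 - 0.25) / (0.25 * t + 0.25) ^ 2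
        + 0.25 * 0.25 / (0.25 * t + 0.25) + 1.5 * 6.25 * t
    ∀ t ≥ (0 : ℝ),
      (∫ p, (p.1 - ψ (Real.sqrt 0.5 * Real.sign p.1 + p.2)) ^ 2 ∂ν) + 1.5 * 0.5
        < f t := by
  intro _ _ _ t ht
  exact quantizerDistortion_add_power_lt.trans (lt_affineCost ht)
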